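/- Let 0 < μ ≤ 1/2 and assume there exists a set S ⊆ V with μ·Vol(G) ≤ Vol(S) ≤ (1−μ)·Vol(G). Then λ_μ(G) ≥ (1/2)·max{ min{ ((μ/(1−μ))·φ_μ(G))², ((μ²·φ_μ(G) + (1−2μ)·φ_0(G))/(1−μ−μ²))² }, φ_0(G)² }. -/

import Mathlib

open Finset

/-! The coarea formula writes the total variation of a nonnegative function as the integral over
`s` of the cuts of its superlevel sets `{f > s}`, so an isoperimetric inequality for these sets
becomes a lower bound for the total variation. Applied to the squares of the positive and negative
parts of `x`, whose total variations are controlled by the Dirichlet energy through Cauchy–Schwarz,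
it gives Cheeger's inequality, provided that `{x > 0}` and `{x < 0}` carry at most half of the
volume each; subtracting a median achieves this, and yields the `φ₀` bound.

If `x` has mean zero and `√(μ / ((1 - μ) Vol)) ≤ |x| ≤ √((1 - μ) / (μ Vol))`, then no median is
needed: `{x > 0}` and `{x < 0}` are themselves `μ`-balanced. As `x²` is at least
`a = μ / ((1 - μ) Vol)`, all superlevel sets of the squared parts at heights `s < a` are equal to
these two sets and obey the better inequality with `φ_μ`, while the higher ones may have small
volume and obey only the weaker of the two inequalities. -/

section Definitions

variable {V : Type*}

/-- The volume of a vertex set with respect to the vertex weights `d`. -/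
def vertexVolume (d : V → ℝ) (S : Finset V) : ℝ := ∑ v ∈ S, d v

variable [Fintype V]

/-- The degree of a vertex in the graph with edge weights `w`. A loop at `v` counts once. -/
def weightedDegree (w : V → V → ℝ) (v : V) : ℝ := ∑ u, w v u

/-- The set of vertices at which `f` exceeds the height `s`. -/
noncomputable def superlevel (f : V → ℝ) (s : ℝ) : Finset V := {v | s < f v}

/-- The total variation of a function on the vertices. Summing positive parts over ordered pairs
counts each edge of a symmetric graph once, with the absolute difference at its endpoints. -/
def totalVariation (w : V → V → ℝ) (f : V → ℝ) : ℝ := ∑ u, ∑ v, w u v * (f u - f v)⁺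

/-- The Dirichlet energy, i.e. the quadratic form of the graph Laplacian. -/
noncomputable def dirichletEnergy (w : V → V → ℝ) (x : V → ℝ) : ℝ :=
  (1 / 2) * ∑ u, ∑ v, w u v * (x u - x v) ^ 2

variable [DecidableEq V]

/-- The weight of the edges leaving a vertex set. -/
def cutWeight (w : V → V → ℝ) (S : Finset V) : ℝ := ∑ u ∈ S, ∑ v ∈ Sᶜ, w u v

/-- The conductance of a vertex set. It has the junk value `0` if `S` or its complement has volume
zero. -/
noncomputable def conductance (w : V → V → ℝ) (S : Finset V) : ℝ :=
  cutWeight w S / min (vertexVolume (weightedDegree w) S) (vertexVolume (weightedDegree w) Sᶜ)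

end Definitions

section Volume

variable {V : Type*} {d : V → ℝ}

theorem vertexVolume_empty (d : V → ℝ) : vertexVolume d ∅ = 0 := sum_empty

theorem vertexVolume_nonneg (hd : ∀ v, 0 ≤ d v) (S : Finset V) : 0 ≤ vertexVolume d S :=
  sum_nonneg fun v _ => hd v

theorem vertexVolume_mono (hd : ∀ v, 0 ≤ d v) : Monotone (vertexVolume d) :=
  fun _ _ hST => sum_le_sum_of_subset_of_nonneg hST fun v _ _ => hd v

variable [Fintype V]

theorem vertexVolume_add_compl [DecidableEq V] (d : V → ℝ) (S : Finset V) :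
    vertexVolume d S + vertexVolume d Sᶜ = vertexVolume d univ :=
  sum_add_sum_compl S d

theorem vertexVolume_superlevel (d f : V → ℝ) (s : ℝ) :
    vertexVolume d (superlevel f s) = ∑ v, if s < f v then d v else 0 :=
  sum_filter _ _

theorem exists_median [Nonempty V] (hd : ∀ v, 0 ≤ d v) (x : V → ℝ) :
    ∃ c, 2 * vertexVolume d (superlevel (fun v => x v - c) 0) ≤ vertexVolume d univ ∧
      2 * vertexVolume d (superlevel (fun v => -(x v - c)) 0) ≤ vertexVolume d univ := by
  classical
  let T : Finset V :=
    {u | 2 * vertexVolume d (superlevel (fun v => x v - x u) 0) ≤ vertexVolume d univ}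
  have hT : T.Nonempty := by
    obtain ⟨u, -, hu⟩ := exists_max_image univ x univ_nonempty
    have hempty : superlevel (fun v => x v - x u) 0 = ∅ :=
      filter_false_of_mem fun v hv => by linarith [hu v hv]
    refine ⟨u, mem_filter.2 ⟨mem_univ u, ?_⟩⟩
    rw [hempty, vertexVolume_empty, mul_zero]
    exact vertexVolume_nonneg hd univ
  obtain ⟨u, huT, hu_min⟩ := exists_min_image T x hT
  refine ⟨x u, (mem_filter.1 huT).2, ?_⟩
  obtain hempty | hne := (superlevel (fun v => -(x v - x u)) 0).eq_empty_or_nonempty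
  · rw [hempty, vertexVolume_empty, mul_zero]
    exact vertexVolume_nonneg hd univ
  obtain ⟨z, hz, hz_max⟩ := exists_max_image _ x hne
  have hz_above :
      vertexVolume d univ < 2 * vertexVolume d (superlevel (fun v => x v - x z) 0) := by
    by_contra! hle
    have hzu : x z < x u := by simpa [superlevel] using hz
    exact (hu_min z (mem_filter.2 ⟨mem_univ z, hle⟩)).not_gt hzu
  have hsub : superlevel (fun v => -(x v - x u)) 0 ⊆ (superlevel (fun v => x v - x z) 0)ᶜ :=
    fun v hv => by simpa [superlevel] using hz_max v hv
  linarith [vertexVolume_mono hd hsub,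
    vertexVolume_add_compl d (superlevel (fun v => x v - x z) 0)]

theorem add_mul_vertexVolume_superlevel_le {x : V → ℝ} {α β : ℝ} (hd : ∀ v, 0 ≤ d v)
    (hmean : ∑ v, d v * x v = 0) (hx : ∀ v, α ≤ |x v| ∧ |x v| ≤ β) :
    (α + β) * vertexVolume d (superlevel x 0) ≤ β * vertexVolume d univ := by
  have hpointwise (v : V) : (α + β) * (if 0 < x v then d v else 0) - β * d v ≤ d v * x v := by
    obtain ⟨hα, hβ⟩ := hx v
    split_ifs with hv
    · rw [abs_of_pos hv] at hα
      nlinarith [mul_le_mul_of_nonneg_left hα (hd v)]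
    · rw [abs_of_nonpos (not_lt.1 hv)] at hβ
      nlinarith [mul_le_mul_of_nonneg_left hβ (hd v)]
  have hsum := sum_le_sum fun v (_ : v ∈ univ) => hpointwise v
  rw [sum_sub_distrib, ← mul_sum, ← mul_sum, ← vertexVolume_superlevel, hmean] at hsum
  exact sub_nonpos.1 hsum

theorem vertexVolume_superlevel_add_superlevel_neg (d : V → ℝ) {x : V → ℝ} (hx : ∀ v, x v ≠ 0) :
    vertexVolume d (superlevel x 0) + vertexVolume d (superlevel (fun v => -x v) 0) =
      vertexVolume d univ := by
  rw [vertexVolume_superlevel, vertexVolume_superlevel, ← sum_add_distrib]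
  refine sum_congr rfl fun v _ => ?_
  obtain hv | hv := (hx v).lt_or_gt <;> simp [hv, hv.le]

end Volume

section Coarea

variable {V : Type*} [Fintype V]

theorem superlevel_antitone (f : V → ℝ) : Antitone (superlevel f) :=
  fun _ _ hst => monotone_filter_right _ fun _ _ => hst.trans_lt

theorem indicator_vertexVolume_superlevel (d f : V → ℝ) (s : ℝ) :
    (Set.Ici 0).indicator (fun s => vertexVolume d (superlevel f s)) s =
      ∑ v, (Set.Ico 0 (f v)).indicator (fun _ => d v) s := by
  by_cases hs : 0 ≤ s <;> simp [vertexVolume_superlevel, Set.indicator_apply, hs]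

theorem integrable_indicator_Ico (a b c : ℝ) :
    MeasureTheory.Integrable ((Set.Ico a b).indicator fun _ => c) :=
  (MeasureTheory.integrable_indicator_iff measurableSet_Ico).2 <|
    MeasureTheory.integrableOn_const measure_Ico_lt_top.ne

theorem integral_indicator_Ico (a b c : ℝ) :
    ∫ s, (Set.Ico a b).indicator (fun _ => c) s = c * (b - a)⁺ := by
  rw [MeasureTheory.integral_indicator_const c measurableSet_Ico, Real.volume_real_Ico,
    smul_eq_mul, mul_comm, posPart_def]

theorem integrableOn_vertexVolume_superlevel (d f : V → ℝ) :
    MeasureTheory.IntegrableOn (fun s => vertexVolume d (superlevel f s)) (Set.Ici 0) := by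
  rw [← MeasureTheory.integrable_indicator_iff measurableSet_Ici]
  rw [funext (indicator_vertexVolume_superlevel d f)]
  exact MeasureTheory.integrable_finsetSum _ fun v _ => integrable_indicator_Ico _ _ _

theorem setIntegral_vertexVolume_superlevel (d : V → ℝ) {f : V → ℝ} (hf : ∀ v, 0 ≤ f v) :
    ∫ s in Set.Ici 0, vertexVolume d (superlevel f s) = ∑ v, d v * f v := by
  rw [← MeasureTheory.integral_indicator measurableSet_Ici]
  simp_rw [indicator_vertexVolume_superlevel]
  rw [MeasureTheory.integral_finsetSum _ fun v _ => integrable_indicator_Ico _ _ _]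
  simp_rw [integral_indicator_Ico, sub_zero, posPart_eq_self.2 (hf _)]

variable [DecidableEq V]

theorem cutWeight_nonneg {w : V → V → ℝ} (hw : ∀ u v, 0 ≤ w u v) (S : Finset V) :
    0 ≤ cutWeight w S :=
  sum_nonneg fun u _ => sum_nonneg fun v _ => hw u v

theorem cutWeight_superlevel (w : V → V → ℝ) (f : V → ℝ) (s : ℝ) :
    cutWeight w (superlevel f s) =
      ∑ u, ∑ v, (Set.Ico (f v) (f u)).indicator (fun _ => w u v) s := by
  rw [cutWeight, superlevel, compl_filter, sum_filter]
  refine sum_congr rfl fun u _ => ?_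
  by_cases hu : s < f u <;> simp [sum_filter, Set.indicator_apply, hu]

theorem integrable_cutWeight_superlevel (w : V → V → ℝ) (f : V → ℝ) :
    MeasureTheory.Integrable fun s => cutWeight w (superlevel f s) := by
  simp_rw [cutWeight_superlevel]
  exact MeasureTheory.integrable_finsetSum _ fun u _ =>
    MeasureTheory.integrable_finsetSum _ fun v _ => integrable_indicator_Ico _ _ _

theorem integral_cutWeight_superlevel (w : V → V → ℝ) (f : V → ℝ) :
    ∫ s, cutWeight w (superlevel f s) = totalVariation w f := by
  simp_rw [cutWeight_superlevel]
  rw [MeasureTheory.integral_finsetSum _ fun u _ =>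
    MeasureTheory.integrable_finsetSum _ fun v _ => integrable_indicator_Ico _ _ _]
  refine sum_congr rfl fun u _ => ?_
  rw [MeasureTheory.integral_finsetSum _ fun v _ => integrable_indicator_Ico _ _ _]
  simp_rw [integral_indicator_Ico]

theorem mul_sum_le_totalVariation {w : V → V → ℝ} {d f : V → ℝ} {c : ℝ}
    (hw : ∀ u v, 0 ≤ w u v) (hf : ∀ v, 0 ≤ f v)
    (hc : ∀ S ⊆ superlevel f 0, c * vertexVolume d S ≤ cutWeight w S) :
    c * ∑ v, d v * f v ≤ totalVariation w f :=
  calc c * ∑ v, d v * f v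
      = ∫ s in Set.Ici 0, c * vertexVolume d (superlevel f s) := by
        rw [MeasureTheory.integral_const_mul, setIntegral_vertexVolume_superlevel d hf]
    _ ≤ ∫ s in Set.Ici 0, cutWeight w (superlevel f s) :=
        MeasureTheory.setIntegral_mono_on
          ((integrableOn_vertexVolume_superlevel d f).const_mul c)
          (integrable_cutWeight_superlevel w f).integrableOn measurableSet_Ici
          fun _ hs => hc _ (superlevel_antitone f hs)
    _ ≤ ∫ s, cutWeight w (superlevel f s) :=
        MeasureTheory.setIntegral_le_integral (integrable_cutWeight_superlevel w f)
          (.of_forall fun _ => cutWeight_nonneg hw _)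
    _ = totalVariation w f := integral_cutWeight_superlevel w f

theorem mul_posPart_sub_eq_indicator_add {a p q : ℝ} (ha : 0 < a) (hp : p = 0 ∨ a ≤ p)
    (hq : q = 0 ∨ a ≤ q) (r : ℝ) :
    r * (p - q)⁺ = a * (Set.Ico q p).indicator (fun _ => r) 0 + r * ((p - a)⁺ - (q - a)⁺)⁺ := by
  obtain rfl | hp := hp <;> obtain rfl | hq := hq
  · simp
  · simp [ha.le, hq, ha.le.trans hq]
  · have : 0 < p := ha.trans_le hp
    simp [ha.le, hp, this, this.le]
    ring
  · simp [hp, hq, (ha.trans_le hq).not_ge]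

theorem totalVariation_eq_mul_cutWeight_add {f : V → ℝ} {a : ℝ} (w : V → V → ℝ) (ha : 0 < a)
    (hf : ∀ v, f v = 0 ∨ a ≤ f v) :
    totalVariation w f =
      a * cutWeight w (superlevel f 0) + totalVariation w fun v => (f v - a)⁺ := by
  simp_rw [cutWeight_superlevel, totalVariation, mul_sum, ← sum_add_distrib]
  exact sum_congr rfl fun u _ => sum_congr rfl fun v _ =>
    mul_posPart_sub_eq_indicator_add ha (hf u) (hf v) (w u v)

theorem add_mul_le_totalVariation {w : V → V → ℝ} {d f : V → ℝ} {a b c : ℝ}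
    (hw : ∀ u v, 0 ≤ w u v) (ha : 0 < a) (hf : ∀ v, f v = 0 ∨ a ≤ f v)
    (hb : b * vertexVolume d (superlevel f 0) ≤ cutWeight w (superlevel f 0))
    (hc : ∀ S ⊆ superlevel f 0, c * vertexVolume d S ≤ cutWeight w S) :
    c * ∑ v, d v * f v + (b - c) * (a * vertexVolume d (superlevel f 0)) ≤
      totalVariation w f := by
  have hsum : ∑ v, d v * (f v - a)⁺ =
      ∑ v, d v * f v - a * vertexVolume d (superlevel f 0) := by
    rw [vertexVolume_superlevel, mul_sum, ← sum_sub_distrib]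
    refine sum_congr rfl fun v _ => ?_
    obtain hv | hv := hf v
    · simp [hv, ha.le]
    · rw [if_pos (ha.trans_le hv), posPart_eq_self.2 (sub_nonneg.2 hv)]
      ring
  have hsub : superlevel (fun v => (f v - a)⁺) 0 ⊆ superlevel f 0 :=
    monotone_filter_right _ fun v _ hv => by
      contrapose! hv
      exact (posPart_eq_zero.2 (by linarith)).le
  have hexcess := mul_sum_le_totalVariation hw (fun v => posPart_nonneg (f v - a))
    fun S hS => hc S (hS.trans hsub)
  rw [hsum] at hexcess
  rw [totalVariation_eq_mul_cutWeight_add w ha hf]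
  linarith [mul_le_mul_of_nonneg_left hb ha.le]

end Coarea

section Cheeger

theorem abs_sq_posPart_sub_add_abs_sq_negPart_sub_le (x y : ℝ) :
    |x⁺ ^ 2 - y⁺ ^ 2| + |x⁻ ^ 2 - y⁻ ^ 2| ≤ |x - y| * (|x| + |y|) := by
  have hpos : |x⁺ - y⁺| ≤ |x - y| := abs_max_sub_max_le_abs x y 0
  have hneg : |x⁻ - y⁻| ≤ |x - y| := by
    simpa only [negPart_def, neg_sub_neg, abs_sub_comm y x] using
      abs_max_sub_max_le_abs (-x) (-y) 0
  calc |x⁺ ^ 2 - y⁺ ^ 2| + |x⁻ ^ 2 - y⁻ ^ 2|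
      = (x⁺ + y⁺) * |x⁺ - y⁺| + (x⁻ + y⁻) * |x⁻ - y⁻| := by
        rw [sq_sub_sq, sq_sub_sq, abs_mul, abs_mul, abs_of_nonneg (by positivity : 0 ≤ x⁺ + y⁺),
          abs_of_nonneg (by positivity : 0 ≤ x⁻ + y⁻)]
    _ ≤ (x⁺ + y⁺) * |x - y| + (x⁻ + y⁻) * |x - y| := by gcongr
    _ = |x - y| * (|x| + |y|) := by
        rw [← posPart_add_negPart x, ← posPart_add_negPart y]
        ring

variable {V : Type*} [Fintype V] {w : V → V → ℝ}

theorem totalVariation_eq_half_sum_abs (hw_symm : ∀ u v, w u v = w v u) (f : V → ℝ) :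
    totalVariation w f = (1 / 2) * ∑ u, ∑ v, w u v * |f u - f v| := by
  have hswap : totalVariation w f = ∑ u, ∑ v, w u v * (f u - f v)⁻ := by
    rw [totalVariation, sum_comm]
    simp_rw [← posPart_neg, neg_sub, hw_symm]
  have hadd : ∑ u, ∑ v, w u v * |f u - f v| =
      totalVariation w f + ∑ u, ∑ v, w u v * (f u - f v)⁻ := by
    simp_rw [totalVariation, ← posPart_add_negPart (f _ - f _), mul_add, sum_add_distrib]
  linarith

theorem totalVariation_sq_posPart_add_sq_negPart_le (hw_symm : ∀ u v, w u v = w v u)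
    (hw : ∀ u v, 0 ≤ w u v) (x : V → ℝ) :
    totalVariation w (fun v => (x v)⁺ ^ 2) + totalVariation w (fun v => (x v)⁻ ^ 2) ≤
      (1 / 2) * ∑ u, ∑ v, w u v * (|x u - x v| * (|x u| + |x v|)) := by
  simp_rw [totalVariation_eq_half_sum_abs hw_symm, ← mul_add, ← sum_add_distrib, ← mul_add]
  gcongr with u _ v _
  · exact hw u v
  · exact abs_sq_posPart_sub_add_abs_sq_negPart_sub_le (x u) (x v)

theorem sum_mul_sq_abs_add_abs_le (hw_symm : ∀ u v, w u v = w v u) (hw : ∀ u v, 0 ≤ w u v)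
    (x : V → ℝ) :
    ∑ u, ∑ v, w u v * (|x u| + |x v|) ^ 2 ≤ 4 * ∑ v, weightedDegree w v * x v ^ 2 := by
  have hfst : ∑ u, ∑ v, w u v * x u ^ 2 = ∑ v, weightedDegree w v * x v ^ 2 := by
    simp_rw [weightedDegree, sum_mul]
  have hsnd : ∑ u, ∑ v, w u v * x v ^ 2 = ∑ v, weightedDegree w v * x v ^ 2 := by
    rw [sum_comm, ← hfst]
    simp_rw [hw_symm]
  calc ∑ u, ∑ v, w u v * (|x u| + |x v|) ^ 2
      ≤ ∑ u, ∑ v, w u v * (2 * (|x u| ^ 2 + |x v| ^ 2)) := by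
        gcongr with u _ v _
        · exact hw u v
        · exact add_sq_le
    _ = 2 * (∑ u, ∑ v, w u v * x u ^ 2 + ∑ u, ∑ v, w u v * x v ^ 2) := by
        simp_rw [sq_abs, mul_left_comm _ (2 : ℝ), ← mul_sum, mul_add, sum_add_distrib, mul_add]
    _ = 4 * ∑ v, weightedDegree w v * x v ^ 2 := by
        rw [hfst, hsnd]
        ring

theorem dirichletEnergy_nonneg (hw : ∀ u v, 0 ≤ w u v) (x : V → ℝ) : 0 ≤ dirichletEnergy w x :=
  mul_nonneg one_half_pos.le <| sum_nonneg fun u _ => sum_nonneg fun v _ =>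
    mul_nonneg (hw u v) (sq_nonneg _)

theorem sq_totalVariation_le (hw_symm : ∀ u v, w u v = w v u) (hw : ∀ u v, 0 ≤ w u v)
    (x : V → ℝ) :
    (totalVariation w (fun v => (x v)⁺ ^ 2) + totalVariation w (fun v => (x v)⁻ ^ 2)) ^ 2 ≤
      2 * dirichletEnergy w x * ∑ v, weightedDegree w v * x v ^ 2 := by
  have hTV_nonneg (f : V → ℝ) : 0 ≤ totalVariation w f :=
    sum_nonneg fun u _ => sum_nonneg fun v _ => mul_nonneg (hw u v) (posPart_nonneg _)
  have hcauchy : (∑ u, ∑ v, w u v * (|x u - x v| * (|x u| + |x v|))) ^ 2 ≤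
      (∑ u, ∑ v, w u v * (x u - x v) ^ 2) * ∑ u, ∑ v, w u v * (|x u| + |x v|) ^ 2 := by
    simp_rw [← Fintype.sum_prod_type']
    refine sum_sq_le_sum_mul_sum_of_sq_le_mul univ
      (fun p _ => mul_nonneg (hw _ _) (sq_nonneg _))
      (fun p _ => mul_nonneg (hw _ _) (sq_nonneg _)) fun p _ => le_of_eq ?_
    rw [← sq_abs (x p.1 - x p.2)]
    ring
  calc (totalVariation w (fun v => (x v)⁺ ^ 2) + totalVariation w (fun v => (x v)⁻ ^ 2)) ^ 2
      ≤ ((1 / 2) * ∑ u, ∑ v, w u v * (|x u - x v| * (|x u| + |x v|))) ^ 2 :=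
        pow_le_pow_left₀ (add_nonneg (hTV_nonneg _) (hTV_nonneg _))
          (totalVariation_sq_posPart_add_sq_negPart_le hw_symm hw x) 2
    _ ≤ (1 / 2) * dirichletEnergy w x * ∑ u, ∑ v, w u v * (|x u| + |x v|) ^ 2 := by
        rw [dirichletEnergy]
        linarith
    _ ≤ (1 / 2) * dirichletEnergy w x * (4 * ∑ v, weightedDegree w v * x v ^ 2) :=
        mul_le_mul_of_nonneg_left (sum_mul_sq_abs_add_abs_le hw_symm hw x)
          (mul_nonneg one_half_pos.le (dirichletEnergy_nonneg hw x))
    _ = 2 * dirichletEnergy w x * ∑ v, weightedDegree w v * x v ^ 2 := by ring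

theorem half_sq_mul_le_dirichletEnergy (hw_symm : ∀ u v, w u v = w v u) (hw : ∀ u v, 0 ≤ w u v)
    {x : V → ℝ} {K : ℝ} (hK : 0 ≤ K)
    (hTV : K * ∑ v, weightedDegree w v * x v ^ 2 ≤
      totalVariation w (fun v => (x v)⁺ ^ 2) + totalVariation w (fun v => (x v)⁻ ^ 2)) :
    (1 / 2) * K ^ 2 * ∑ v, weightedDegree w v * x v ^ 2 ≤ dirichletEnergy w x := by
  have hbound := sq_totalVariation_le hw_symm hw x
  set Q := ∑ v, weightedDegree w v * x v ^ 2
  have hQ : 0 ≤ Q :=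
    sum_nonneg fun v _ => mul_nonneg (sum_nonneg fun u _ => hw v u) (sq_nonneg _)
  obtain hQ | hQ := hQ.eq_or_lt
  · simpa [← hQ] using dirichletEnergy_nonneg hw x
  · have hsq := pow_le_pow_left₀ (mul_nonneg hK hQ.le) hTV 2
    refine le_of_mul_le_mul_right ?_ hQ
    linarith

theorem superlevel_sq_posPart_zero (z : V → ℝ) :
    superlevel (fun v => (z v)⁺ ^ 2) 0 = superlevel z 0 := by
  ext v
  simp [superlevel, sq_pos_iff]

theorem superlevel_sq_negPart_zero (z : V → ℝ) :
    superlevel (fun v => (z v)⁻ ^ 2) 0 = superlevel (fun v => -z v) 0 := by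
  simpa only [posPart_neg] using superlevel_sq_posPart_zero fun v => -z v

theorem sq_posPart_add_sq_negPart (x : ℝ) : x⁺ ^ 2 + x⁻ ^ 2 = x ^ 2 := by
  obtain hx | hx := le_total 0 x
  · simp [hx]
  · simp [hx]

theorem sum_mul_sq_posPart_add_sum_mul_sq_negPart (d x : V → ℝ) :
    ∑ v, d v * (x v)⁺ ^ 2 + ∑ v, d v * (x v)⁻ ^ 2 = ∑ v, d v * x v ^ 2 := by
  simp_rw [← sum_add_distrib, ← mul_add, sq_posPart_add_sq_negPart]

theorem sum_mul_sq_le_sum_mul_sub_sq {d x : V → ℝ} (hd : ∀ v, 0 ≤ d v)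
    (hmean : ∑ v, d v * x v = 0) (c : ℝ) :
    ∑ v, d v * x v ^ 2 ≤ ∑ v, d v * (x v - c) ^ 2 := by
  have hexpand : ∑ v, d v * (x v - c) ^ 2 =
      ∑ v, d v * x v ^ 2 - 2 * c * ∑ v, d v * x v + c ^ 2 * ∑ v, d v := by
    rw [mul_sum, mul_sum, ← sum_sub_distrib, ← sum_add_distrib]
    exact sum_congr rfl fun v _ => by ring
  rw [hexpand, hmean]
  linarith [mul_nonneg (sq_nonneg c) (sum_nonneg fun v (_ : v ∈ univ) => hd v)]

variable [DecidableEq V]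

theorem cheeger_inequality [Nonempty V] {x : V → ℝ} {φ : ℝ} (hw_symm : ∀ u v, w u v = w v u)
    (hw : ∀ u v, 0 ≤ w u v) (hφ : 0 ≤ φ)
    (hiso : ∀ S, 2 * vertexVolume (weightedDegree w) S ≤ vertexVolume (weightedDegree w) univ →
      φ * vertexVolume (weightedDegree w) S ≤ cutWeight w S)
    (hmean : ∑ v, weightedDegree w v * x v = 0) :
    (1 / 2) * φ ^ 2 * ∑ v, weightedDegree w v * x v ^ 2 ≤ dirichletEnergy w x := by
  have hd (v : V) : 0 ≤ weightedDegree w v := sum_nonneg fun u _ => hw v u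
  obtain ⟨c, hpos, hneg⟩ := exists_median hd x
  have hiso_sub {f : V → ℝ} (hf : 2 * vertexVolume (weightedDegree w) (superlevel f 0) ≤
      vertexVolume (weightedDegree w) univ) (S : Finset V) (hS : S ⊆ superlevel f 0) :
      φ * vertexVolume (weightedDegree w) S ≤ cutWeight w S :=
    hiso S (by linarith [vertexVolume_mono hd hS])
  have hTV_pos := mul_sum_le_totalVariation hw (fun v => sq_nonneg (x v - c)⁺)
    (hiso_sub (by rwa [superlevel_sq_posPart_zero]))
  have hTV_neg := mul_sum_le_totalVariation hw (fun v => sq_nonneg (x v - c)⁻)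
    (hiso_sub (by rwa [superlevel_sq_negPart_zero]))
  have hshift : dirichletEnergy w (fun v => x v - c) = dirichletEnergy w x := by
    simp_rw [dirichletEnergy, sub_sub_sub_cancel_right]
  calc (1 / 2) * φ ^ 2 * ∑ v, weightedDegree w v * x v ^ 2
      ≤ (1 / 2) * φ ^ 2 * ∑ v, weightedDegree w v * (x v - c) ^ 2 := by
        gcongr ?_ * ?_
        exact sum_mul_sq_le_sum_mul_sub_sq hd hmean c
    _ ≤ dirichletEnergy w (fun v => x v - c) := by
        refine half_sq_mul_le_dirichletEnergy hw_symm hw hφ ?_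
        rw [← sum_mul_sq_posPart_add_sum_mul_sq_negPart, mul_add]
        exact add_le_add hTV_pos hTV_neg
    _ = dirichletEnergy w x := hshift

theorem add_mul_le_totalVariation_sq_posPart_add_sq_negPart {d x : V → ℝ} {a b c : ℝ}
    (hw : ∀ u v, 0 ≤ w u v) (ha : 0 < a) (hx : ∀ v, a ≤ x v ^ 2)
    (hb_pos : b * vertexVolume d (superlevel x 0) ≤ cutWeight w (superlevel x 0))
    (hb_neg : b * vertexVolume d (superlevel (fun v => -x v) 0) ≤
      cutWeight w (superlevel (fun v => -x v) 0))
    (hc_pos : ∀ S ⊆ superlevel x 0, c * vertexVolume d S ≤ cutWeight w S)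
    (hc_neg : ∀ S ⊆ superlevel (fun v => -x v) 0, c * vertexVolume d S ≤ cutWeight w S) :
    c * ∑ v, d v * x v ^ 2 + (b - c) * (a * vertexVolume d univ) ≤
      totalVariation w (fun v => (x v)⁺ ^ 2) + totalVariation w (fun v => (x v)⁻ ^ 2) := by
  have hx0 (v : V) : x v ≠ 0 := sq_pos_iff.1 (ha.trans_le (hx v))
  have hgap_pos (v : V) : (x v)⁺ ^ 2 = 0 ∨ a ≤ (x v)⁺ ^ 2 := by
    obtain h | h := le_total (x v) 0 <;> simp [h, hx v]
  have hgap_neg (v : V) : (x v)⁻ ^ 2 = 0 ∨ a ≤ (x v)⁻ ^ 2 := by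
    obtain h | h := le_total (x v) 0 <;> simp [h, hx v]
  rw [← superlevel_sq_posPart_zero] at hb_pos hc_pos
  rw [← superlevel_sq_negPart_zero] at hb_neg hc_neg
  have hTV_pos := add_mul_le_totalVariation hw ha hgap_pos hb_pos hc_pos
  have hTV_neg := add_mul_le_totalVariation hw ha hgap_neg hb_neg hc_neg
  rw [superlevel_sq_posPart_zero] at hTV_pos
  rw [superlevel_sq_negPart_zero] at hTV_neg
  rw [← vertexVolume_superlevel_add_superlevel_neg d hx0,
    ← sum_mul_sq_posPart_add_sum_mul_sq_negPart]
  linarith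

end Cheeger

section MuConductance

theorem mul_sqrt_div_mul {q : ℝ} (hq : 0 ≤ q) (p m : ℝ) : q * √(p / (q * m)) = √(p * q / m) := by
  nth_rw 1 [← Real.sqrt_sq hq]
  rw [← Real.sqrt_mul (sq_nonneg q)]
  congr 1
  obtain rfl | hq := hq.eq_or_lt
  · simp
  · field_simp

variable {V : Type*} [Fintype V]

theorem vertexVolume_superlevel_le_of_sqrt_le_abs_le_sqrt {d x : V → ℝ} {μ : ℝ}
    (hd : ∀ v, 0 ≤ d v) (hm : 0 < vertexVolume d univ) (hμ0 : 0 < μ) (hμ1 : μ < 1)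
    (hmean : ∑ v, d v * x v = 0)
    (hx : ∀ v, √(μ / ((1 - μ) * vertexVolume d univ)) ≤ |x v| ∧
      |x v| ≤ √((1 - μ) / (μ * vertexVolume d univ))) :
    vertexVolume d (superlevel x 0) ≤ (1 - μ) * vertexVolume d univ := by
  have h := add_mul_vertexVolume_superlevel_le hd hmean hx
  have hratio : (1 - μ) * √(μ / ((1 - μ) * vertexVolume d univ)) =
      μ * √((1 - μ) / (μ * vertexVolume d univ)) := by
    rw [mul_sqrt_div_mul (sub_nonneg.2 hμ1.le), mul_sqrt_div_mul hμ0.le, mul_comm μ]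
  have hβ : 0 < √((1 - μ) / (μ * vertexVolume d univ)) :=
    Real.sqrt_pos.2 (div_pos (sub_pos.2 hμ1) (mul_pos hμ0 hm))
  set α := √(μ / ((1 - μ) * vertexVolume d univ))
  set β := √((1 - μ) / (μ * vertexVolume d univ))
  refine le_of_mul_le_mul_left ?_ hβ
  calc β * vertexVolume d (superlevel x 0)
      = (1 - μ) * ((α + β) * vertexVolume d (superlevel x 0)) := by
        linear_combination -(vertexVolume d (superlevel x 0)) * hratio
    _ ≤ (1 - μ) * (β * vertexVolume d univ) := mul_le_mul_of_nonneg_left h (sub_nonneg.2 hμ1.le)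
    _ = β * ((1 - μ) * vertexVolume d univ) := by ring

variable [DecidableEq V] {w : V → V → ℝ} {μ : ℝ}

theorem min_mul_vertexVolume_le_cutWeight {d : V → ℝ} {φ b : ℝ} {S : Finset V}
    (hd : ∀ v, 0 ≤ d v) (hμhalf : μ ≤ 1 / 2)
    (hiso : ∀ S, 2 * vertexVolume d S ≤ vertexVolume d univ →
      φ * vertexVolume d S ≤ cutWeight w S)
    (hiso_balanced : ∀ S, μ * vertexVolume d univ ≤ vertexVolume d S →
      vertexVolume d S ≤ (1 - μ) * vertexVolume d univ → b * vertexVolume d S ≤ cutWeight w S)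
    (hS : vertexVolume d S ≤ (1 - μ) * vertexVolume d univ) :
    min b φ * vertexVolume d S ≤ cutWeight w S := by
  have hS_nonneg := vertexVolume_nonneg hd S
  obtain hμS | hSμ := le_total (μ * vertexVolume d univ) (vertexVolume d S)
  · exact (mul_le_mul_of_nonneg_right (min_le_left b φ) hS_nonneg).trans (hiso_balanced S hμS hS)
  · exact (mul_le_mul_of_nonneg_right (min_le_right b φ) hS_nonneg).trans
      (hiso S (by linarith [mul_le_mul_of_nonneg_right hμhalf (vertexVolume_nonneg hd univ)]))

theorem half_sq_le_dirichletEnergy_of_balanced_isoperimetry [Nonempty V] {x : V → ℝ} {φ b : ℝ}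
    (hw_symm : ∀ u v, w u v = w v u) (hw : ∀ u v, 0 ≤ w u v) (hμ0 : 0 < μ) (hμhalf : μ ≤ 1 / 2)
    (hd : ∀ v, 0 < weightedDegree w v)
    (hφ : 0 ≤ φ) (hb : 0 ≤ b)
    (hiso : ∀ S, 2 * vertexVolume (weightedDegree w) S ≤ vertexVolume (weightedDegree w) univ →
      φ * vertexVolume (weightedDegree w) S ≤ cutWeight w S)
    (hiso_balanced : ∀ S, μ * vertexVolume (weightedDegree w) univ ≤
        vertexVolume (weightedDegree w) S →
      vertexVolume (weightedDegree w) S ≤ (1 - μ) * vertexVolume (weightedDegree w) univ →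
      b * vertexVolume (weightedDegree w) S ≤ cutWeight w S)
    (hmean : ∑ v, weightedDegree w v * x v = 0) (hnorm : ∑ v, weightedDegree w v * x v ^ 2 = 1)
    (hx : ∀ v, √(μ / ((1 - μ) * vertexVolume (weightedDegree w) univ)) ≤ |x v| ∧
      |x v| ≤ √((1 - μ) / (μ * vertexVolume (weightedDegree w) univ))) :
    (1 / 2) * (min b φ + (b - min b φ) * (μ / (1 - μ))) ^ 2 ≤ dirichletEnergy w x := by
  have hd_nonneg (v : V) : 0 ≤ weightedDegree w v := (hd v).le
  have hm : 0 < vertexVolume (weightedDegree w) univ := sum_pos (fun v _ => hd v) univ_nonempty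
  have hμ1 : 0 < 1 - μ := by linarith
  set d := weightedDegree w
  set m := vertexVolume d univ
  have ha : 0 < μ / ((1 - μ) * m) := by positivity
  have hx_sq (v : V) : μ / ((1 - μ) * m) ≤ x v ^ 2 := by
    rw [← sq_abs, ← Real.sqrt_le_left (abs_nonneg _)]
    exact (hx v).1
  have hx0 (v : V) : x v ≠ 0 := sq_pos_iff.1 (ha.trans_le (hx_sq v))
  have hpos : vertexVolume d (superlevel x 0) ≤ (1 - μ) * m :=
    vertexVolume_superlevel_le_of_sqrt_le_abs_le_sqrt hd_nonneg hm hμ0 (by linarith) hmean hx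
  have hneg : vertexVolume d (superlevel (fun v => -x v) 0) ≤ (1 - μ) * m :=
    vertexVolume_superlevel_le_of_sqrt_le_abs_le_sqrt hd_nonneg hm hμ0 (by linarith)
      (by simpa using hmean) (by simpa using hx)
  have hadd := vertexVolume_superlevel_add_superlevel_neg d hx0
  have hmin {P : Finset V} (hP : vertexVolume d P ≤ (1 - μ) * m) (S : Finset V) (hS : S ⊆ P) :
      min b φ * vertexVolume d S ≤ cutWeight w S :=
    min_mul_vertexVolume_le_cutWeight hd_nonneg hμhalf hiso hiso_balanced
      ((vertexVolume_mono hd_nonneg hS).trans hP)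
  have hTV := add_mul_le_totalVariation_sq_posPart_add_sq_negPart hw ha hx_sq
    (hiso_balanced _ (by linarith) hpos) (hiso_balanced _ (by linarith) hneg)
    (hmin hpos) (hmin hneg)
  have ham : μ / ((1 - μ) * m) * m = μ / (1 - μ) := by field_simp
  rw [ham, hnorm, mul_one] at hTV
  have hK : 0 ≤ min b φ + (b - min b φ) * (μ / (1 - μ)) :=
    add_nonneg (le_min hb hφ)
      (mul_nonneg (sub_nonneg.2 (min_le_left b φ)) (div_nonneg hμ0.le hμ1.le))
  calc (1 / 2) * (min b φ + (b - min b φ) * (μ / (1 - μ))) ^ 2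
      = (1 / 2) * (min b φ + (b - min b φ) * (μ / (1 - μ))) ^ 2 * ∑ v, d v * x v ^ 2 := by
        rw [hnorm, mul_one]
    _ ≤ dirichletEnergy w x :=
        half_sq_mul_le_dirichletEnergy hw_symm hw hK (by rwa [hnorm, mul_one])

theorem conductance_nonneg (hw : ∀ u v, 0 ≤ w u v) (S : Finset V) : 0 ≤ conductance w S :=
  have hd (v : V) : 0 ≤ weightedDegree w v := sum_nonneg fun u _ => hw v u
  div_nonneg (cutWeight_nonneg hw S)
    (le_min (vertexVolume_nonneg hd S) (vertexVolume_nonneg hd Sᶜ))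

theorem mul_vertexVolume_le_cutWeight_of_two_mul_le {φ : ℝ} (hw : ∀ u v, 0 ≤ w u v)
    (hd : ∀ v, 0 < weightedDegree w v)
    (hφ : ∀ S : Finset V, S.Nonempty → S ≠ univ → φ ≤ conductance w S) (S : Finset V)
    (hS : 2 * vertexVolume (weightedDegree w) S ≤ vertexVolume (weightedDegree w) univ) :
    φ * vertexVolume (weightedDegree w) S ≤ cutWeight w S := by
  obtain rfl | hne := S.eq_empty_or_nonempty
  · rw [vertexVolume_empty, mul_zero]
    exact cutWeight_nonneg hw ∅
  have hS_pos : 0 < vertexVolume (weightedDegree w) S := sum_pos (fun v _ => hd v) hne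
  have hS_ne : S ≠ univ := by
    rintro rfl
    linarith
  have h := hφ S hne hS_ne
  rwa [conductance, min_eq_left (by linarith [vertexVolume_add_compl (weightedDegree w) S]),
    le_div_iff₀ hS_pos] at h

theorem mul_vertexVolume_le_cutWeight_of_balanced {φ : ℝ} {S : Finset V} (hμ0 : 0 < μ)
    (hμhalf : μ ≤ 1 / 2) (hm : 0 < vertexVolume (weightedDegree w) univ) (hφ0 : 0 ≤ φ)
    (hφ : φ ≤ conductance w S)
    (hμS : μ * vertexVolume (weightedDegree w) univ ≤ vertexVolume (weightedDegree w) S)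
    (hSμ : vertexVolume (weightedDegree w) S ≤ (1 - μ) * vertexVolume (weightedDegree w) univ) :
    μ / (1 - μ) * φ * vertexVolume (weightedDegree w) S ≤ cutWeight w S := by
  have hcompl := vertexVolume_add_compl (weightedDegree w) S
  rw [conductance] at hφ
  set m := vertexVolume (weightedDegree w) univ
  set volS := vertexVolume (weightedDegree w) S
  set volSc := vertexVolume (weightedDegree w) Sᶜ
  have hμ1 : 0 < 1 - μ := by linarith
  have hμm : 0 < μ * m := mul_pos hμ0 hm
  have hmin : 0 < min volS volSc := lt_min (by linarith) (by linarith)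
  have hratio_le_one : μ / (1 - μ) ≤ 1 := (div_le_one hμ1).2 (by linarith)
  have hratio : μ / (1 - μ) * volS ≤ min volS volSc := by
    refine le_min (mul_le_of_le_one_left (by linarith) hratio_le_one) ?_
    calc μ / (1 - μ) * volS ≤ μ / (1 - μ) * ((1 - μ) * m) := by gcongr
      _ = μ * m := by field_simp
      _ ≤ volSc := by linarith
  calc μ / (1 - μ) * φ * volS = φ * (μ / (1 - μ) * volS) := by ring
    _ ≤ φ * min volS volSc := mul_le_mul_of_nonneg_left hratio hφ0
    _ ≤ cutWeight w S := (le_div_iff₀ hmin).1 hφ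

/- With `b = μ / (1 - μ) * φμ`, the second term on the left is the average of `φ₀` and `b` with
weight `(1 - 2μ) / (1 - μ - μ²)` on `φ₀`. If `φ₀ ≤ b`, the right-hand side is an average
of the same numbers with the smaller weight `(1 - 2μ) / (1 - μ)` on `φ₀`. -/
theorem min_le_min_add_sub_min_mul {φ₀ φμ : ℝ} (hμ0 : 0 < μ) (hμhalf : μ ≤ 1 / 2) :
    min (μ / (1 - μ) * φμ) ((μ ^ 2 * φμ + (1 - 2 * μ) * φ₀) / (1 - μ - μ ^ 2)) ≤
      min (μ / (1 - μ) * φμ) φ₀ +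
        (μ / (1 - μ) * φμ - min (μ / (1 - μ) * φμ) φ₀) * (μ / (1 - μ)) := by
  obtain hle | hle := le_total (μ / (1 - μ) * φμ) φ₀
  · simp [hle]
  refine (min_le_right _ _).trans ?_
  have hμ1 : 0 < 1 - μ := by linarith
  have hden : 0 < 1 - μ - μ ^ 2 := by nlinarith
  rw [min_eq_right hle, div_le_iff₀ hden, ← sub_nonneg]
  have hdiff : (φ₀ + (μ / (1 - μ) * φμ - φ₀) * (μ / (1 - μ))) * (1 - μ - μ ^ 2) -
      (μ ^ 2 * φμ + (1 - 2 * μ) * φ₀) =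
      (μ / (1 - μ) * φμ - φ₀) * (μ / (1 - μ) * μ * (1 - 2 * μ)) := by
    field_simp
    ring
  rw [hdiff]
  have : 0 ≤ 1 - 2 * μ := by linarith
  have := sub_nonneg.2 hle
  positivity

theorem min_sq_le_sq_min_add_sub_min_mul {φ₀ φμ : ℝ} (hμ0 : 0 < μ) (hμhalf : μ ≤ 1 / 2)
    (hφ₀ : 0 ≤ φ₀) (hφμ : 0 ≤ φμ) :
    min ((μ / (1 - μ) * φμ) ^ 2)
        (((μ ^ 2 * φμ + (1 - 2 * μ) * φ₀) / (1 - μ - μ ^ 2)) ^ 2) ≤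
      (min (μ / (1 - μ) * φμ) φ₀ +
        (μ / (1 - μ) * φμ - min (μ / (1 - μ) * φμ) φ₀) * (μ / (1 - μ))) ^ 2 := by
  have hμ1 : 0 ≤ 1 - μ := by linarith
  have hμ2 : 0 ≤ 1 - 2 * μ := by linarith
  have hden : 0 ≤ 1 - μ - μ ^ 2 := by nlinarith
  obtain h | h := min_le_iff.1 (min_le_min_add_sub_min_mul (φ₀ := φ₀) (φμ := φμ) hμ0 hμhalf)
  · exact (min_le_left _ _).trans (pow_le_pow_left₀ (by positivity) h 2)
  · exact (min_le_right _ _).trans (pow_le_pow_left₀ (by positivity) h 2)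

theorem mu_conductance_cheeger_lower_general [Nonempty V] {φ₀ φμ lam : ℝ}
    (hw_symm : ∀ u v, w u v = w v u) (hw : ∀ u v, 0 ≤ w u v)
    (hd : ∀ v, 0 < weightedDegree w v) (hμ0 : 0 < μ) (hμhalf : μ ≤ 1 / 2)
    (hφ₀ : IsLeast {y | ∃ S : Finset V, S.Nonempty ∧ S ≠ univ ∧ y = conductance w S} φ₀)
    (hφμ : IsLeast {y | ∃ S : Finset V,
      μ * vertexVolume (weightedDegree w) univ ≤ vertexVolume (weightedDegree w) S ∧
      vertexVolume (weightedDegree w) S ≤ (1 - μ) * vertexVolume (weightedDegree w) univ ∧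
      y = conductance w S} φμ)
    (hlam : IsGLB {y | ∃ x : V → ℝ,
      ∑ v, weightedDegree w v * x v = 0 ∧ ∑ v, weightedDegree w v * x v ^ 2 = 1 ∧
      (∀ v, √(μ / ((1 - μ) * vertexVolume (weightedDegree w) univ)) ≤ |x v| ∧
        |x v| ≤ √((1 - μ) / (μ * vertexVolume (weightedDegree w) univ))) ∧
      y = dirichletEnergy w x} lam) :
    (1 / 2) * max
      (min ((μ / (1 - μ) * φμ) ^ 2)
        (((μ ^ 2 * φμ + (1 - 2 * μ) * φ₀) / (1 - μ - μ ^ 2)) ^ 2))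
      (φ₀ ^ 2) ≤ lam := by
  have hφ₀_nonneg : 0 ≤ φ₀ := by
    obtain ⟨S, -, -, rfl⟩ := hφ₀.1
    exact conductance_nonneg hw S
  have hφμ_nonneg : 0 ≤ φμ := by
    obtain ⟨S, -, -, rfl⟩ := hφμ.1
    exact conductance_nonneg hw S
  have hiso := mul_vertexVolume_le_cutWeight_of_two_mul_le hw hd
    fun S hne hS => hφ₀.2 ⟨S, hne, hS, rfl⟩
  refine hlam.2 ?_
  rintro _ ⟨x, hmean, hnorm, hx, rfl⟩
  rw [mul_max_of_nonneg _ _ one_half_pos.le]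
  refine max_le ?_ (by simpa [hnorm] using cheeger_inequality hw_symm hw hφ₀_nonneg hiso hmean)
  refine (mul_le_mul_of_nonneg_left
    (min_sq_le_sq_min_add_sub_min_mul hμ0 hμhalf hφ₀_nonneg hφμ_nonneg) one_half_pos.le).trans ?_
  exact half_sq_le_dirichletEnergy_of_balanced_isoperimetry hw_symm hw hμ0 hμhalf hd hφ₀_nonneg
    (mul_nonneg (div_nonneg hμ0.le (by linarith)) hφμ_nonneg) hiso
    (fun S hμS hSμ => mul_vertexVolume_le_cutWeight_of_balanced hμ0 hμhalf
      (sum_pos (fun v _ => hd v) univ_nonempty) hφμ_nonneg (hφμ.2 ⟨S, hμS, hSμ, rfl⟩) hμS hSμ)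
    hmean hnorm hx

end MuConductance

theorem mu_conductance_cheeger_lower {V : Type*} [Fintype V] [DecidableEq V] [Nonempty V]
    (w : V → V → ℝ)
    (hw_symm : ∀ u v, w u v = w v u)
    (hw_nonneg : ∀ u v, 0 ≤ w u v)
    (hw_loop : ∀ v, w v v = 0)
    (d : V → ℝ) (hd : ∀ v, d v = ∑ u, w v u)
    (hd_pos : ∀ v, 0 < d v)
    (vol : Finset V → ℝ) (hvol : ∀ S : Finset V, vol S = ∑ v ∈ S, d v)
    (cut : Finset V → ℝ) (hcut : ∀ S : Finset V, cut S = ∑ u ∈ S, ∑ v ∈ Sᶜ, w u v)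
    (phi : Finset V → ℝ) (hphi : ∀ S : Finset V, phi S = cut S / min (vol S) (vol Sᶜ))
    (QL QD : (V → ℝ) → ℝ)
    (hQL : ∀ x : V → ℝ, QL x = (1/2) * ∑ u, ∑ v, w u v * (x u - x v)^2)
    (hQD : ∀ x : V → ℝ, QD x = ∑ v, d v * x v ^ 2)
    (μ : ℝ) (hμ0 : 0 < μ) (hμhalf : μ ≤ 1/2)
    (phi0 : ℝ)
    (hphi0 : IsLeast {y : ℝ | ∃ S : Finset V, S.Nonempty ∧ S ≠ Finset.univ ∧ y = phi S} phi0)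
    (phimu : ℝ)
    (hphimu : IsLeast {y : ℝ | ∃ S : Finset V,
        μ * vol Finset.univ ≤ vol S ∧ vol S ≤ (1 - μ) * vol Finset.univ ∧ y = phi S} phimu)
    (lam : ℝ)
    (hlam : IsGLB {y : ℝ | ∃ x : V → ℝ,
        (∑ v, d v * x v) = 0 ∧ QD x = 1 ∧
        (∀ v, Real.sqrt (μ / ((1 - μ) * vol Finset.univ)) ≤ |x v| ∧
              |x v| ≤ Real.sqrt ((1 - μ) / (μ * vol Finset.univ))) ∧ y = QL x} lam)
    :
    lam ≥ (1/2) * max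
      (min ((μ / (1 - μ) * phimu)^2)
           (((μ^2 * phimu + (1 - 2*μ) * phi0) / (1 - μ - μ^2))^2))
      (phi0^2) := by
  rcases funext hd, funext hvol, funext hcut, funext hphi, funext hQL, funext hQD with
    ⟨rfl, rfl, rfl, rfl, rfl, rfl⟩
  exact mu_conductance_cheeger_lower_general hw_symm hw_nonneg hd_pos hμ0 hμhalf hphi0 hphimu hlam
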